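/- For sufficiently large ρ the following holds: if V ∈ 𝒱(r,n) with 1 ≤ n ≤ d and ξ ∈ Ξ₂(V), then |ξ_V| ≤ 2ρ^{(α₁+α₂)/2} in the case n = 1, and |ξ_V| ≤ 2ρ^{α_n} in the case 2 ≤ n ≤ d. -/

import Mathlib

noncomputable section

open Set Submodule Module MeasureTheory Relation
open scoped RealInnerProductSpace

variable {d : ℕ}

/-- The lattice Γ generated over ℤ by the basis `B` of ℝ^d. -/
def latticeOf (B : Basis (Fin d) ℝ (EuclideanSpace ℝ (Fin d))) :
    Submodule ℤ (EuclideanSpace ℝ (Fin d)) :=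
  Submodule.span ℤ (Set.range B)

/-- The determinant d(Γ) of the lattice generated by `B`. -/
def latDet (B : Basis (Fin d) ℝ (EuclideanSpace ℝ (Fin d))) : ℝ :=
  |(EuclideanSpace.basisFun (Fin d) ℝ).toBasis.det (fun i => B i)|

/-- The dual lattice Γ† = {θ : θ·g ∈ 2πℤ for all g ∈ Γ}. -/
def dualLattice (B : Basis (Fin d) ℝ (EuclideanSpace ℝ (Fin d))) :
    Set (EuclideanSpace ℝ (Fin d)) :=
  {θ | ∀ g ∈ latticeOf B, ∃ k : ℤ, ⟪θ, g⟫ = 2 * Real.pi * k}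

/-- Θ_r : nonzero dual lattice vectors of norm at most r. -/
def Theta (B : Basis (Fin d) ℝ (EuclideanSpace ℝ (Fin d))) (r : ℝ) :
    Set (EuclideanSpace ℝ (Fin d)) :=
  {θ | θ ∈ dualLattice B ∧ θ ≠ 0 ∧ ‖θ‖ ≤ r}

/-- Θ_r⁰ : dual lattice vectors of norm at most r (including 0). -/
def Theta0 (B : Basis (Fin d) ℝ (EuclideanSpace ℝ (Fin d))) (r : ℝ) :
    Set (EuclideanSpace ℝ (Fin d)) :=
  {θ | θ ∈ dualLattice B ∧ ‖θ‖ ≤ r}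

/-- A lattice r-subspace: a subspace spanned by dual lattice vectors from Θ_r⁰. -/
def IsLatticeSubspace (B : Basis (Fin d) ℝ (EuclideanSpace ℝ (Fin d))) (r : ℝ)
    (V : Submodule ℝ (EuclideanSpace ℝ (Fin d))) : Prop :=
  ∃ S : Set (EuclideanSpace ℝ (Fin d)), S ⊆ Theta0 B r ∧ V = Submodule.span ℝ S

/-- Orthogonal projection ξ_V onto a subspace, viewed in the ambient space. -/
def projV (V : Submodule ℝ (EuclideanSpace ℝ (Fin d))) (ξ : EuclideanSpace ℝ (Fin d)) :
    EuclideanSpace ℝ (Fin d) :=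
  (orthogonalProjection V ξ : EuclideanSpace ℝ (Fin d))

/-- ω_n: the volume of the unit ball in ℝ^n. -/
def unitBallVol (n : ℕ) : ℝ :=
  (MeasureTheory.volume (Metric.ball (0 : EuclideanSpace ℝ (Fin n)) 1)).toReal

/-- The resonant layer Λ(θ) (= ℝ^d when θ = 0). -/
def layer (ρ a : ℝ) (θ : EuclideanSpace ℝ (Fin d)) : Set (EuclideanSpace ℝ (Fin d)) :=
  {ξ | θ = 0 ∨ |⟪ξ, θ⟫| < ρ ^ a * ‖θ‖}

/-- Υ_θ(ξ): the points θ-resonant congruent to ξ. -/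
def upsTheta (ρ a : ℝ) (θ ξ : EuclideanSpace ℝ (Fin d)) : Set (EuclideanSpace ℝ (Fin d)) :=
  {η | ξ ∈ layer ρ a θ ∧ η ∈ layer ρ a θ ∧ ∃ l : ℤ, ξ - η = (l : ℝ) • θ}

/-- One step of resonant congruence (with some θ ∈ Θ_r⁰). -/
def resStep (B : Basis (Fin d) ℝ (EuclideanSpace ℝ (Fin d))) (ρ a r : ℝ)
    (ξ η : EuclideanSpace ℝ (Fin d)) : Prop :=
  ∃ θ ∈ Theta0 B r, η ∈ upsTheta ρ a θ ξ

/-- Υ(ξ): all points resonant congruent to ξ. -/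
def Ups (B : Basis (Fin d) ℝ (EuclideanSpace ℝ (Fin d))) (ρ a r : ℝ)
    (ξ : EuclideanSpace ℝ (Fin d)) : Set (EuclideanSpace ℝ (Fin d)) :=
  {η | Relation.ReflTransGen (resStep B ρ a r) ξ η}

/-- N(ξ) = Υ(ξ) − ξ. -/
def resN (B : Basis (Fin d) ℝ (EuclideanSpace ℝ (Fin d))) (ρ a r : ℝ)
    (ξ : EuclideanSpace ℝ (Fin d)) : Set (EuclideanSpace ℝ (Fin d)) :=
  {m | ξ + m ∈ Ups B ρ a r ξ}

/-- Ξ₁(V) = {ξ : |ξ_V| < ρ^{α_n}}, n = dim V. -/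
def Xi1 (ρ : ℝ) (α : ℕ → ℝ) (V : Submodule ℝ (EuclideanSpace ℝ (Fin d))) :
    Set (EuclideanSpace ℝ (Fin d)) :=
  {ξ | ‖projV V ξ‖ < ρ ^ α (Module.finrank ℝ V)}

/-- Ξ₂(V) = ∪_{ξ ∈ Ξ₁(V)} Υ(ξ). -/
def Xi2 (B : Basis (Fin d) ℝ (EuclideanSpace ℝ (Fin d))) (ρ r : ℝ) (α : ℕ → ℝ)
    (V : Submodule ℝ (EuclideanSpace ℝ (Fin d))) : Set (EuclideanSpace ℝ (Fin d)) :=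
  {η | ∃ ξ ∈ Xi1 ρ α V, η ∈ Ups B ρ (α 1) r ξ}

/-- Ξ(V): Ξ₂(V) minus the Ξ₂(W) for all lattice r-subspaces W of larger dimension. -/
def Xi (B : Basis (Fin d) ℝ (EuclideanSpace ℝ (Fin d))) (ρ r : ℝ) (α : ℕ → ℝ)
    (V : Submodule ℝ (EuclideanSpace ℝ (Fin d))) : Set (EuclideanSpace ℝ (Fin d)) :=
  Xi2 B ρ r α V \
    ⋃ W ∈ {W : Submodule ℝ (EuclideanSpace ℝ (Fin d)) |
        IsLatticeSubspace B r W ∧ Module.finrank ℝ V < Module.finrank ℝ W},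
      Xi2 B ρ r α W

/-- The standing conditions on the parameters ρ ≥ 1, r, κ > 0 and the exponents α_j:
0 = α₀, α_{n+1} > α_n + 2κd², α_d < 1, r ≤ ρ^κ, and r ≥ r₀ (i.e. Θ_r⁰ spans ℝ^d). -/
def GoodParams (B : Basis (Fin d) ℝ (EuclideanSpace ℝ (Fin d))) (ρ r κ : ℝ)
    (α : ℕ → ℝ) : Prop :=
  1 ≤ ρ ∧ 0 < κ ∧ α 0 = 0 ∧ (∀ n < d, α n + 2 * κ * (d : ℝ) ^ 2 < α (n + 1)) ∧
    α d < 1 ∧ r ≤ ρ ^ κ ∧ Submodule.span ℝ (Theta0 B r) = ⊤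

/-!
The point is that all points of `Υ(ξ)` are close to `ξ`; since orthogonal projections contract,
moving from `Ξ₁(V)` to `Ξ₂(V)` then hardly changes `|ξ_V|`.

The determinant of `d` independent vectors of `Γ†` with respect to a basis of `Γ†` is a nonzero
integer, and it is at most a constant times the product of their lengths. Hence a vector of `Θ_r⁰`
outside the span of some others has distance at least `c r^{1-d}` from that span.

Build a chain of resonant congruences backwards from its end `η`, and let `U` be the span of its
steps. Prepending a step in `U` changes neither `U` nor `η_U`. If a new first step `θ`, from `ξ` to
the old start `ζ`, enlarges `U`, then by induction `ζ - η` is bounded by `|ζ_U| + |η_U|`, while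
`ζ ∈ Λ(θ)`; so `η` has a bounded component along `θ`, and the angle between `θ` and `U` costs a
factor `O(r^d)` in the bound for the projection of `η` onto the new span. This happens at most `d`
times, so both ends of the chain have projections `O(r^{d²} ρ^{α₁}) = O(ρ^{α₁ + κd²})` onto `U`, and
this also bounds their distance. The exponent is below `(α₁ + α₂) / 2`.
-/

section StarProjection

variable {𝕜 E : Type*} [RCLike 𝕜] [NormedAddCommGroup E] [InnerProductSpace 𝕜 E]

lemma starProjection_sup_apply_of_isOrtho {U V : Submodule 𝕜 E} [U.HasOrthogonalProjection]
    [V.HasOrthogonalProjection] [(U ⊔ V).HasOrthogonalProjection] (h : U ⟂ V) (x : E) :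
    (U ⊔ V).starProjection x = U.starProjection x + V.starProjection x := by
  refine eq_starProjection_of_mem_orthogonal
    (add_mem_sup (U.starProjection_apply_mem x) (V.starProjection_apply_mem x)) ?_
  rw [← inf_orthogonal]
  constructor
  · rw [← sub_sub]
    exact sub_mem (U.sub_starProjection_mem_orthogonal x) (h.symm (V.starProjection_apply_mem x))
  · rw [add_comm, ← sub_sub]
    exact sub_mem (V.sub_starProjection_mem_orthogonal x) (h (U.starProjection_apply_mem x))

lemma norm_starProjection_span_singleton_apply (u x : E) :
    ‖(𝕜 ∙ u).starProjection x‖ = ‖inner 𝕜 u x‖ / ‖u‖ := by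
  rcases eq_or_ne u 0 with rfl | hu
  · simp
  have : ‖u‖ ≠ 0 := norm_ne_zero_iff.2 hu
  rw [starProjection_singleton, norm_smul, norm_div, RCLike.norm_ofReal, abs_sq]
  field_simp

lemma sup_span_singleton_sub_of_mem {R M : Type*} [Ring R] [AddCommGroup M] [Module R M]
    {U : Submodule R M} {p : M} (hp : p ∈ U) (x : M) :
    U ⊔ R ∙ (x - p) = U ⊔ R ∙ x := by
  refine le_antisymm (sup_le le_sup_left ?_) (sup_le le_sup_left ?_) <;>
    rw [span_singleton_le_iff_mem]
  · exact sub_mem (mem_sup_right (mem_span_singleton_self x)) (mem_sup_left hp)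
  · simpa using add_mem (mem_sup_right (mem_span_singleton_self (x - p))) (mem_sup_left hp)

lemma norm_starProjection_sup_span_singleton_apply_le (U : Submodule 𝕜 E)
    [U.HasOrthogonalProjection] (v : E) [(U ⊔ 𝕜 ∙ v).HasOrthogonalProjection] (x : E) :
    ‖(U ⊔ 𝕜 ∙ v).starProjection x‖ ≤ ‖U.starProjection x‖ +
      (‖inner 𝕜 x v‖ + ‖U.starProjection x‖ * ‖v‖) / ‖v - U.starProjection v‖ := by
  set u := v - U.starProjection v
  have hU : U ⟂ 𝕜 ∙ u :=
    IsOrtho.symm ((span_singleton_le_iff_mem _ _).2 (U.sub_starProjection_mem_orthogonal v))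
  have hsup : U ⊔ 𝕜 ∙ v = U ⊔ 𝕜 ∙ u :=
    (sup_span_singleton_sub_of_mem (U.starProjection_apply_mem v) v).symm
  have hinner : ‖inner 𝕜 u x‖ ≤ ‖inner 𝕜 x v‖ + ‖U.starProjection x‖ * ‖v‖ := by
    rw [norm_inner_symm, inner_sub_right, ← U.inner_starProjection_left_eq_right]
    exact (norm_sub_le _ _).trans (by gcongr; exact norm_inner_le_norm _ _)
  have : (U ⊔ 𝕜 ∙ u).HasOrthogonalProjection := hsup ▸ ‹_›
  calc ‖(U ⊔ 𝕜 ∙ v).starProjection x‖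
      = ‖U.starProjection x + (𝕜 ∙ u).starProjection x‖ := by
        simp only [hsup, starProjection_sup_apply_of_isOrtho hU]
    _ ≤ ‖U.starProjection x‖ + ‖inner 𝕜 u x‖ / ‖u‖ := by
        rw [← norm_starProjection_span_singleton_apply]
        exact norm_add_le _ _
    _ ≤ _ := by gcongr

lemma norm_sub_le_add_of_sub_mem {U : Submodule 𝕜 E} [U.HasOrthogonalProjection] {x y : E}
    (h : x - y ∈ U) : ‖x - y‖ ≤ ‖U.starProjection x‖ + ‖U.starProjection y‖ := by
  rw [← starProjection_eq_self_iff.2 h, map_sub]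
  exact norm_sub_le _ _

lemma norm_starProjection_le_add_norm_sub (U : Submodule 𝕜 E) [U.HasOrthogonalProjection]
    (x y : E) : ‖U.starProjection x‖ ≤ ‖U.starProjection y‖ + ‖y - x‖ := by
  refine (norm_le_norm_add_norm_sub (U.starProjection y) (U.starProjection x)).trans ?_
  rw [← map_sub]
  gcongr
  exact U.norm_starProjection_apply_le (y - x)

end StarProjection

section Transverse

variable {E : Type*} [NormedAddCommGroup E] [NormedSpace ℝ E]

/-- The set `Θ` is `δ`-transverse: a vector of `Θ` outside the span of a subset of `Θ` has distance
at least `δ` from that span. -/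
def IsTransverse (Θ : Set E) (δ : ℝ) : Prop :=
  ∀ S ⊆ Θ, ∀ θ ∈ Θ, θ ∉ span ℝ S → ∀ w ∈ span ℝ S, δ ≤ ‖θ - w‖

lemma exists_basis_apply_eq_of_notMem_span {K M ι : Type*} [DivisionRing K] [AddCommGroup M]
    [Module K M] (D : Basis ι K M) {S : Set M} {x : M} (hx : x ∉ span K S) :
    ∃ (b : Basis ι K M) (i : ι), b i = x ∧ (∀ j ≠ i, b j ∈ S ∪ range D) ∧
      span K S ≤ span K (b '' {i}ᶜ) := by
  obtain ⟨s, hsS, hspan, hs⟩ := exists_linearIndependent K S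
  have hxs : LinearIndepOn K id (insert x s) := LinearIndepOn.id_insert hs (by rwa [hspan])
  have hst : insert x s ⊆ insert x (S ∪ range D) :=
    insert_subset_insert (hsS.trans subset_union_left)
  have ht : ⊤ ≤ span K (insert x (S ∪ range D)) := by
    rw [← D.span_eq]
    exact span_mono (subset_union_right.trans (subset_insert _ _))
  let b₀ := Basis.extendLe hxs hst ht
  let b : Basis ι K M := b₀.reindex (b₀.indexEquiv D)
  have hrange : range b = range b₀ := b₀.range_reindex _
  have hmem : insert x s ⊆ range b := hrange ▸ Basis.subset_extendLe hxs hst ht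
  obtain ⟨i, hi⟩ := hmem (mem_insert x s)
  refine ⟨b, i, hi, fun j hj => ?_, ?_⟩
  · have : b j ∈ insert x (S ∪ range D) :=
      Basis.extendLe_subset hxs hst ht (hrange ▸ mem_range_self j)
    exact this.resolve_left fun h => hj (b.injective (h.trans hi.symm))
  · rw [← hspan]
    refine span_mono fun y hy => ?_
    obtain ⟨j, rfl⟩ := hmem (mem_insert_of_mem x hy)
    refine ⟨j, ?_, rfl⟩
    rintro rfl
    exact hx (hspan ▸ hi ▸ subset_span hy)

lemma one_le_abs_det_of_mem_span_int {ι M : Type*} [Fintype ι] [DecidableEq ι] [AddCommGroup M]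
    [Module ℝ M] (D b : Basis ι ℝ M) (hb : ∀ i, b i ∈ span ℤ (range D)) : 1 ≤ |D.det b| := by
  have hint : ∀ i j, ∃ k : ℤ, (k : ℝ) = D.repr (b j) i := fun i j =>
    (D.mem_span_iff_repr_mem ℤ (b j)).1 (hb j) i
  choose k hk using hint
  have hdet : D.det b = ((Matrix.of k).det : ℤ) := by
    rw [Basis.det_apply, Int.cast_det]
    congr 1
    ext i j
    exact (hk i j).symm
  have hne := (D.isUnit_det b).ne_zero
  rw [hdet] at hne ⊢
  exact_mod_cast Int.one_le_abs (by exact_mod_cast hne)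

lemma continuous_basis_det {ι : Type*} [Fintype ι] [DecidableEq ι] (D : Basis ι ℝ E) :
    Continuous D.det := by
  have := D.finiteDimensional_of_finite
  refine Continuous.matrix_det (continuous_matrix fun i j => ?_)
  exact (D.coord i).continuous_of_finiteDimensional.comp (continuous_apply j)

lemma alternatingMap_update_sub_of_mem_span {K M N ι : Type*} [DivisionRing K] [AddCommGroup M]
    [Module K M] [AddCommGroup N] [Module K N] [DecidableEq ι] (f : M [⋀^ι]→ₗ[K] N) {v : ι → M}
    {i : ι} {w : M} (hw : w ∈ span K (v '' {i}ᶜ)) : f (Function.update v i (v i - w)) = f v := by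
  have hzero : f (Function.update v i w) = 0 := by
    refine f.map_linearDependent _ fun h => linearIndependent_iff_notMem_span.1 h i ?_
    rw [Function.update_self, ← compl_eq_univ_sdiff]
    convert hw using 2
    exact image_congr fun j hj => Function.update_of_ne hj _ _
  rw [f.map_update_sub, hzero, sub_zero, Function.update_eq_self]

-- The distance is `C⁻¹ * R ^ (1 - card ι)`, written so as to avoid truncated subtraction.
lemma exists_isTransverse_of_subset_span_int {ι : Type*} [Fintype ι] (D : Basis ι ℝ E) :
    ∃ C : ℝ, 0 < C ∧ ∀ R : ℝ, 1 ≤ R → ∀ Θ ⊆ (span ℤ (range D) : Set E), (∀ θ ∈ Θ, ‖θ‖ ≤ R) →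
      IsTransverse Θ (R / (C * R ^ Fintype.card ι)) := by
  classical
  obtain ⟨A, hA, hdet⟩ := D.det.exists_bound_of_continuous (continuous_basis_det D)
  obtain ⟨M, hM⟩ := (finite_range fun i => ‖D i‖).bddAbove
  set m := max M 1
  have hDm : ∀ i, ‖D i‖ ≤ m := fun i => (hM (mem_range_self i)).trans (le_max_left M 1)
  have hm : 1 ≤ m := le_max_right M 1
  refine ⟨A * m ^ Fintype.card ι, by positivity, ?_⟩
  intro R hR Θ hΘD hΘR S hS θ hθ hθS w hw
  obtain ⟨b, i, rfl, hb, hSb⟩ := exists_basis_apply_eq_of_notMem_span D hθS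
  have hbD : ∀ j, b j ∈ span ℤ (range D) := fun j => by
    rcases eq_or_ne j i with rfl | hj
    · exact hΘD hθ
    · exact (hb j hj).elim (fun h => hΘD (hS h)) fun h => subset_span h
  have hbR : ∀ j ≠ i, ‖b j‖ ≤ m * R := fun j hj => by
    rcases hb j hj with h | ⟨k, hk⟩
    · exact (hΘR _ (hS h)).trans (le_mul_of_one_le_left (by positivity) hm)
    · exact hk ▸ (hDm k).trans (le_mul_of_one_le_right (by positivity) hR)
  have hprod : ∏ j, ‖Function.update b i (b i - w) j‖ ≤
      ‖b i - w‖ * ∏ _j ∈ Finset.univ.erase i, m * R := by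
    rw [← Finset.mul_prod_erase Finset.univ _ (Finset.mem_univ i), Function.update_self]
    gcongr with j hj
    rw [Function.update_of_ne (Finset.ne_of_mem_erase hj)]
    exact hbR j (Finset.ne_of_mem_erase hj)
  have hone : 1 ≤ A * (‖b i - w‖ * ∏ _j ∈ Finset.univ.erase i, m * R) :=
    calc 1 ≤ |D.det b| := one_le_abs_det_of_mem_span_int D b hbD
      _ = ‖D.det (Function.update b i (b i - w))‖ := by
        rw [alternatingMap_update_sub_of_mem_span D.det (hSb hw), Real.norm_eq_abs]
      _ ≤ A * ∏ j, ‖Function.update b i (b i - w) j‖ := hdet _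
      _ ≤ _ := by gcongr
  rw [div_le_iff₀ (by positivity)]
  calc R ≤ m * R := le_mul_of_one_le_left (by positivity) hm
    _ ≤ A * (‖b i - w‖ * ∏ _j ∈ Finset.univ.erase i, m * R) * (m * R) :=
        le_mul_of_one_le_left (by positivity) hone
    _ = A * ‖b i - w‖ * ((∏ _j ∈ Finset.univ.erase i, m * R) * (m * R)) := by ring
    _ = A * ‖b i - w‖ * (m * R) ^ Fintype.card ι := by
        rw [Finset.prod_erase_mul _ _ (Finset.mem_univ i), Finset.prod_const, Finset.card_univ]
    _ = ‖b i - w‖ * (A * m ^ Fintype.card ι * R ^ Fintype.card ι) := by ring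

end Transverse

section ResonantChain

variable {E : Type*} [NormedAddCommGroup E] [InnerProductSpace ℝ E]

/-- Resonant congruence along `θ` with the width `c` of the layer as a parameter; compared with
`upsTheta` the layer is closed and all real multiples of `θ` are allowed. -/
def IsResonantCongr (c : ℝ) (θ ξ η : E) : Prop :=
  |⟪ξ, θ⟫| ≤ c * ‖θ‖ ∧ |⟪η, θ⟫| ≤ c * ‖θ‖ ∧ ξ - η ∈ ℝ ∙ θ

/-- `ResonantChain Θ c S ξ η`: a chain of resonant congruences leads from `ξ` to `η`, and the set of
vectors of `Θ` along which its steps are taken is exactly `S`. -/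
inductive ResonantChain (Θ : Set E) (c : ℝ) : Set E → E → E → Prop
  | nil (ξ : E) : ResonantChain Θ c ∅ ξ ξ
  | cons {S : Set E} {θ ξ ζ η : E} (hθ : θ ∈ Θ) (h : IsResonantCongr c θ ξ ζ)
      (hc : ResonantChain Θ c S ζ η) : ResonantChain Θ c (insert θ S) ξ η

variable {Θ S : Set E} {c δ R : ℝ} {θ ξ ζ η : E}

lemma IsResonantCongr.symm (h : IsResonantCongr c θ ξ η) : IsResonantCongr c θ η ξ :=
  ⟨h.2.1, h.1, sub_mem_comm_iff.1 h.2.2⟩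

namespace ResonantChain

lemma snoc (hc : ResonantChain Θ c S ξ ζ) (hθ : θ ∈ Θ) (h : IsResonantCongr c θ ζ η) :
    ResonantChain Θ c (insert θ S) ξ η := by
  induction hc with
  | nil ξ => exact cons hθ h (nil η)
  | cons hθ' h' _ ih => exact insert_comm _ _ _ ▸ cons hθ' h' (ih h)

lemma symm (hc : ResonantChain Θ c S ξ η) : ResonantChain Θ c S η ξ := by
  induction hc with
  | nil ξ => exact nil ξ
  | cons hθ h _ ih => exact ih.snoc hθ h.symm

lemma subset (hc : ResonantChain Θ c S ξ η) : S ⊆ Θ := by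
  induction hc with
  | nil _ => exact empty_subset Θ
  | cons hθ _ _ ih => exact insert_subset hθ ih

lemma sub_mem_span (hc : ResonantChain Θ c S ξ η) : ξ - η ∈ span ℝ S := by
  induction hc with
  | nil _ => simp
  | @cons S θ ξ ζ η _ h _ ih =>
    rw [span_insert, ← sub_add_sub_cancel ξ ζ η]
    exact add_mem_sup h.2.2 ih

end ResonantChain

lemma norm_starProjection_sup_span_singleton_le_mul {U : Submodule ℝ E}
    [U.HasOrthogonalProjection] [(U ⊔ ℝ ∙ θ).HasOrthogonalProjection] {f : ℝ} (hδ : 0 < δ)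
    (hθR : ‖θ‖ ≤ R) (hθδ : δ ≤ ‖θ - U.starProjection θ‖) (hζη : ζ - η ∈ U)
    (hζ : ‖U.starProjection ζ‖ ≤ f) (hη : ‖U.starProjection η‖ ≤ f)
    (hζθ : |⟪ζ, θ⟫| ≤ f * ‖θ‖) :
    ‖(U ⊔ ℝ ∙ θ).starProjection η‖ ≤ (1 + 4 * R / δ) * f := by
  have hf : 0 ≤ f := (norm_nonneg _).trans hη
  have hdist : ‖ζ - η‖ ≤ 2 * f := by linarith [norm_sub_le_add_of_sub_mem hζη]
  have hηθ : |⟪η, θ⟫| ≤ 3 * f * ‖θ‖ :=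
    calc |⟪η, θ⟫| = |⟪ζ, θ⟫ - ⟪ζ - η, θ⟫| := by rw [inner_sub_left, sub_sub_cancel]
      _ ≤ |⟪ζ, θ⟫| + |⟪ζ - η, θ⟫| := abs_sub _ _
      _ ≤ f * ‖θ‖ + 2 * f * ‖θ‖ := by
        gcongr
        exact (abs_real_inner_le_norm _ _).trans (by gcongr)
      _ = 3 * f * ‖θ‖ := by ring
  calc ‖(U ⊔ ℝ ∙ θ).starProjection η‖
      ≤ ‖U.starProjection η‖ +
          (|⟪η, θ⟫| + ‖U.starProjection η‖ * ‖θ‖) / ‖θ - U.starProjection θ‖ :=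
        norm_starProjection_sup_span_singleton_apply_le U θ η
    _ ≤ f + (3 * f * R + f * R) / δ := by
        have hR : 0 ≤ R := (norm_nonneg θ).trans hθR
        have hηR : |⟪η, θ⟫| ≤ 3 * f * R := hηθ.trans (by gcongr)
        gcongr
    _ = (1 + 4 * R / δ) * f := by ring

namespace ResonantChain

variable [FiniteDimensional ℝ E]

lemma norm_starProjection_span_le (hΘ : IsTransverse Θ δ) (hδ : 0 < δ) (hR : 0 ≤ R)
    (hΘR : ∀ θ ∈ Θ, ‖θ‖ ≤ R) (hc₀ : 0 ≤ c) {k : ℕ} (hk : finrank ℝ (span ℝ S) ≤ k)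
    (hc : ResonantChain Θ c S ξ η) :
    ‖(span ℝ S).starProjection η‖ ≤ (1 + 4 * R / δ) ^ k * c := by
  have hA : 1 ≤ 1 + 4 * R / δ := le_add_of_nonneg_right (by positivity)
  induction k generalizing S ξ η with
  | zero =>
    have hbot : span ℝ S = ⊥ := finrank_eq_zero.1 (Nat.le_zero.1 hk)
    simpa [hbot] using hc₀
  | succ k ihk =>
    induction hc with
    | nil _ => simpa using by positivity
    | @cons S θ ξ ζ η hθ h hc ih =>
      by_cases hθS : θ ∈ span ℝ S
      · rw [span_insert_eq_span hθS] at hk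
        simpa only [span_insert_eq_span hθS] using ih hk
      have hkS : finrank ℝ (span ℝ S) ≤ k := by
        have hlt : span ℝ S < span ℝ (insert θ S) :=
          (span_mono (subset_insert θ S)).lt_of_ne fun he =>
            hθS (he ▸ subset_span (mem_insert θ S))
        exact Nat.le_of_lt_succ ((finrank_lt_finrank_of_lt hlt).trans_le hk)
      have hζθ : |⟪ζ, θ⟫| ≤ (1 + 4 * R / δ) ^ k * c * ‖θ‖ :=
        h.2.1.trans (by gcongr; exact le_mul_of_one_le_left hc₀ (one_le_pow₀ hA))
      -- The tail chain stays in a span of smaller dimension and can be reversed, so the induction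
      -- hypothesis controls both of its ends.
      rw [pow_succ', mul_assoc]
      simpa only [span_insert, sup_comm] using
        norm_starProjection_sup_span_singleton_le_mul hδ (hΘR θ hθ)
          (hΘ S hc.subset θ hθ hθS _ (starProjection_apply_mem _ θ)) hc.sub_mem_span
          (ihk hkS hc.symm) (ihk hkS hc) hζθ

lemma norm_sub_le (hΘ : IsTransverse Θ δ) (hδ : 0 < δ) (hR : 0 ≤ R) (hΘR : ∀ θ ∈ Θ, ‖θ‖ ≤ R)
    (hc₀ : 0 ≤ c) (hc : ResonantChain Θ c S ξ η) :
    ‖ξ - η‖ ≤ 2 * (1 + 4 * R / δ) ^ finrank ℝ E * c := by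
  have hk := (span ℝ S).finrank_le
  have hξ := norm_starProjection_span_le hΘ hδ hR hΘR hc₀ hk hc.symm
  have hη := norm_starProjection_span_le hΘ hδ hR hΘR hc₀ hk hc
  linarith [norm_sub_le_add_of_sub_mem hc.sub_mem_span]

end ResonantChain

end ResonantChain

section DualLattice

variable (B : Basis (Fin d) ℝ (EuclideanSpace ℝ (Fin d)))

lemma exists_basis_dualLattice_eq_span_int :
    ∃ D : Basis (Fin d) ℝ (EuclideanSpace ℝ (Fin d)), dualLattice B = span ℤ (range D) := by
  let β : LinearMap.BilinForm ℝ (EuclideanSpace ℝ (Fin d)) :=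
    (2 * Real.pi)⁻¹ • innerₗ (EuclideanSpace ℝ (Fin d))
  have hzero : ∀ θ, β θ θ = 0 → θ = 0 := fun θ h => by
    simpa [β, Real.pi_ne_zero] using h
  have hβ : β.Nondegenerate := ⟨fun θ h => hzero θ (h θ), fun θ h => hzero θ (h θ)⟩
  refine ⟨β.dualBasis hβ B, ?_⟩
  rw [← LinearMap.BilinForm.dualSubmodule_span_of_basis]
  ext θ
  refine forall₂_congr fun g _ => ?_
  simp only [β, Submodule.mem_one, LinearMap.smul_apply, innerₗ_apply_apply, smul_eq_mul,
    algebraMap_int_eq, eq_intCast, eq_inv_mul_iff_mul_eq₀ (by positivity : 2 * Real.pi ≠ 0),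
    eq_comm]

variable {B} {ρ a r : ℝ} {ξ η : EuclideanSpace ℝ (Fin d)}

lemma isResonantCongr_of_mem_upsTheta {θ : EuclideanSpace ℝ (Fin d)}
    (h : η ∈ upsTheta ρ a θ ξ) : IsResonantCongr (ρ ^ a) θ ξ η := by
  have hlayer : ∀ {ζ}, ζ ∈ layer ρ a θ → |⟪ζ, θ⟫| ≤ ρ ^ a * ‖θ‖ := by
    rintro ζ (rfl | hζ)
    · simp
    · exact hζ.le
  obtain ⟨hξ, hη, l, hl⟩ := h
  exact ⟨hlayer hξ, hlayer hη, mem_span_singleton.2 ⟨l, hl.symm⟩⟩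

lemma exists_resonantChain_of_mem_Ups (h : η ∈ Ups B ρ a r ξ) :
    ∃ S, ResonantChain (Theta0 B r) (ρ ^ a) S ξ η := by
  induction h using ReflTransGen.head_induction_on with
  | refl => exact ⟨∅, .nil η⟩
  | head hstep _ ih =>
    obtain ⟨θ, hθ, h⟩ := hstep
    obtain ⟨S, hS⟩ := ih
    exact ⟨insert θ S, .cons hθ (isResonantCongr_of_mem_upsTheta h) hS⟩

variable (B)

lemma exists_norm_sub_le_mul_rpow_of_mem_Ups : ∃ C : ℝ, ∀ ρ R r a : ℝ, 0 ≤ ρ → 1 ≤ R → r ≤ R →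
    ∀ ξ, ∀ η ∈ Ups B ρ a r ξ, ‖ξ - η‖ ≤ C * R ^ (d ^ 2) * ρ ^ a := by
  obtain ⟨D, hD⟩ := exists_basis_dualLattice_eq_span_int B
  obtain ⟨C, hC, htrans⟩ := exists_isTransverse_of_subset_span_int D
  refine ⟨2 * (1 + 4 * C) ^ d, fun ρ R r a hρ hR hrR ξ η hη => ?_⟩
  obtain ⟨S, hS⟩ := exists_resonantChain_of_mem_Ups hη
  have hΘR : ∀ θ ∈ Theta0 B r, ‖θ‖ ≤ R := fun θ hθ => hθ.2.trans hrR
  have hR₀ : 0 < R := by positivity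
  have hfactor : 1 + 4 * R / (R / (C * R ^ d)) ≤ (1 + 4 * C) * R ^ d := by
    have : 4 * R / (R / (C * R ^ d)) = 4 * C * R ^ d := by field_simp
    linarith [one_le_pow₀ hR (n := d)]
  calc ‖ξ - η‖ ≤ 2 * (1 + 4 * R / (R / (C * R ^ d))) ^ d * ρ ^ a := by
        simpa using hS.norm_sub_le (htrans R hR _ (fun θ hθ => hD ▸ hθ.1) hΘR) (by positivity)
          hR₀.le hΘR (Real.rpow_nonneg hρ a)
    _ ≤ 2 * ((1 + 4 * C) * R ^ d) ^ d * ρ ^ a := by gcongr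
    _ = 2 * (1 + 4 * C) ^ d * R ^ (d ^ 2) * ρ ^ a := by
        rw [mul_pow, ← pow_mul, ← sq]
        ring

lemma eventually_norm_sub_le_rpow_of_mem_Ups {κ β : ℝ} (hκ : 0 ≤ κ)
    (hβ : a + κ * (d : ℝ) ^ 2 < β) :
    ∀ᶠ ρ : ℝ in Filter.atTop, ∀ r ≤ ρ ^ κ, ∀ ξ, ∀ η ∈ Ups B ρ a r ξ, ‖ξ - η‖ ≤ ρ ^ β := by
  obtain ⟨C, hC⟩ := exists_norm_sub_le_mul_rpow_of_mem_Ups B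
  filter_upwards [Filter.eventually_ge_atTop 1,
    (tendsto_rpow_atTop (sub_pos.2 hβ)).eventually_ge_atTop C] with ρ hρ hCρ r hr ξ η hη
  have hρ₀ : 0 < ρ := by positivity
  calc ‖ξ - η‖ ≤ C * (ρ ^ κ) ^ (d ^ 2) * ρ ^ a :=
        hC ρ (ρ ^ κ) r a hρ₀.le (Real.one_le_rpow hρ hκ) hr ξ η hη
    _ ≤ ρ ^ (β - (a + κ * (d : ℝ) ^ 2)) * (ρ ^ κ) ^ (d ^ 2) * ρ ^ a := by gcongr
    _ = ρ ^ β := by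
        rw [← Real.rpow_mul_natCast hρ₀.le, ← Real.rpow_add hρ₀, ← Real.rpow_add hρ₀]
        push_cast
        ring_nf

end DualLattice

theorem proj_bound_on_Xi2_general (hd : 2 ≤ d) (B : Basis (Fin d) ℝ (EuclideanSpace ℝ (Fin d)))
    {κ : ℝ} {α : ℕ → ℝ} (hκ : 0 ≤ κ)
    (hα : ∀ n, 1 ≤ n → n < d → α n + 2 * κ * (d : ℝ) ^ 2 < α (n + 1)) :
    ∀ᶠ ρ : ℝ in Filter.atTop, ∀ r ≤ ρ ^ κ, ∀ V : Submodule ℝ (EuclideanSpace ℝ (Fin d)),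
      ∀ ξ ∈ Xi2 B ρ r α V,
        (finrank ℝ V = 1 → ‖projV V ξ‖ ≤ 2 * ρ ^ ((α 1 + α 2) / 2)) ∧
        (2 ≤ finrank ℝ V → ‖projV V ξ‖ ≤ 2 * ρ ^ α (finrank ℝ V)) := by
  have hgap : α 1 + κ * (d : ℝ) ^ 2 < (α 1 + α 2) / 2 := by linarith [hα 1 le_rfl hd]
  have hκd : 0 ≤ κ * (d : ℝ) ^ 2 := by positivity
  have hmono : MonotoneOn α (Icc 1 d) := monotoneOn_of_le_succ ordConnected_Icc
    fun n _ hn hn' => by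
      rw [Order.succ_eq_add_one] at hn' ⊢
      linarith [hα n hn.1 hn'.2]
  filter_upwards [Filter.eventually_ge_atTop 1, eventually_norm_sub_le_rpow_of_mem_Ups B hκ hgap]
    with ρ hρ hmove r hr V ξ hξ
  obtain ⟨η, hη, hηξ⟩ := hξ
  have hproj : ‖projV V ξ‖ ≤ ρ ^ α (finrank ℝ V) + ρ ^ ((α 1 + α 2) / 2) :=
    (norm_starProjection_le_add_norm_sub V ξ η).trans (add_le_add hη.le (hmove r hr η ξ hηξ))
  refine ⟨fun hV => ?_, fun hV => ?_⟩
  · have : ρ ^ α 1 ≤ ρ ^ ((α 1 + α 2) / 2) := Real.rpow_le_rpow_of_exponent_le hρ (by linarith)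
    rw [hV] at hproj
    linarith
  · have hVd : finrank ℝ V ≤ d := by simpa using V.finrank_le
    have h2V : α 2 ≤ α (finrank ℝ V) := hmono ⟨one_le_two, hd⟩ ⟨one_le_two.trans hV, hVd⟩ hV
    have : ρ ^ ((α 1 + α 2) / 2) ≤ ρ ^ α (finrank ℝ V) :=
      Real.rpow_le_rpow_of_exponent_le hρ (by linarith)
    linarith

/-- Lemma 5.10: for sufficiently large ρ, if V ∈ 𝒱(r,n) with 1 ≤ n ≤ d and
ξ ∈ Ξ₂(V), then |ξ_V| ≤ 2ρ^{(α₁+α₂)/2} when n = 1 and |ξ_V| ≤ 2ρ^{α_n} when 2 ≤ n ≤ d. -/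
theorem proj_bound_on_Xi2
    (d : ℕ) (hd : 2 ≤ d) (B : Basis (Fin d) ℝ (EuclideanSpace ℝ (Fin d)))
    (κ : ℝ) (α : ℕ → ℝ) :
    ∃ ρ₀ : ℝ, ∀ ρ r : ℝ, ρ₀ ≤ ρ → GoodParams B ρ r κ α →
      ∀ n : ℕ, 1 ≤ n → n ≤ d →
      ∀ V : Submodule ℝ (EuclideanSpace ℝ (Fin d)), IsLatticeSubspace B r V →
        Module.finrank ℝ V = n →
      ∀ ξ ∈ Xi2 B ρ r α V,
        (n = 1 → ‖projV V ξ‖ ≤ 2 * ρ ^ ((α 1 + α 2) / 2)) ∧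
        (2 ≤ n → ‖projV V ξ‖ ≤ 2 * ρ ^ α n) := by
  obtain ⟨ρ₀, h⟩ := Filter.eventually_atTop.1 <| Filter.eventually_imp_distrib_left.2
    fun hκα : 0 < κ ∧ ∀ n < d, α n + 2 * κ * (d : ℝ) ^ 2 < α (n + 1) =>
      proj_bound_on_Xi2_general hd B hκα.1.le fun n _ => hκα.2 n
  exact ⟨ρ₀, fun ρ r hρ ⟨_, hκ, _, hα, _, hr, _⟩ n _ _ V _ hn ξ hξ =>
    hn ▸ h ρ hρ ⟨hκ, hα⟩ r hr V ξ hξ⟩
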